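/- Let ξ ∈ ℝⁿ and let p ∈ C²(ℝⁿ) be positive and ℤⁿ-periodic with P(e^{ξ·x} p(x)) = Λ(ξ) e^{ξ·x} p(x). If q ∈ C²(ℝⁿ) is ℤⁿ-periodic (real- or complex-valued) and e^{ξ·x} q(x) also solves Pu = Λ(ξ)u, then q is a constant multiple of p; i.e., the eigenvalue Λ(ξ) of the operator P(ξ) = e^{-ξ·x} P e^{ξ·x} on the torus ℝⁿ/ℤⁿ is geometrically simple. -/

import Mathlib

/-!
Real and imaginary parts of `q` solve the same equation as `p`, since the coefficients and `Λ(ξ)`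
are real, so `q` may be taken real. Put `u = e^{ξ·x} p > 0` and `w = q / p`. Then `u w` and `u` both
solve `Pv = Λ(ξ) v`, and dividing by `u` shows that `w` solves an elliptic equation
`-∑ a_{ij} ∂_i∂_j w + ∑ B_i ∂_i w = 0` without zeroth-order term and with continuous drift `B`
(`quotient_eq`). Being continuous and periodic, `w` attains its maximum, so it is constant by the
strong maximum principle (`strong_max`).

The strong maximum principle follows Hopf's idea. If `w` is not constant, let `z` be a point of the
maximum set nearest to a point `x₀` outside it, and `ν = x₀ - z`. The quadratic polynomial
`h = s + k s² - |x - z|²`, `s = ν · (x - z)`, vanishes at `z`, is negative on the rest of the maximum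
set near `z`, and for large `k` satisfies `-∑ a_{ij} ∂_i∂_j h + ∑ B_i ∂_i h < 0` near `z`. For small
`ε > 0` the function `w + ε h` has a local maximum near `z` (`exists_isLocalMax_perturbed`), which
contradicts the first and second derivative conditions there (`sum_pd_pd_nonpos`).
-/

set_option autoImplicit false

open MeasureTheory Filter

noncomputable section

/-- The partial derivative of a function on `ℝⁿ` in the `i`-th coordinate direction. -/
def pd {n : ℕ} {E : Type*} [NormedAddCommGroup E] [NormedSpace ℝ E]
    (i : Fin n) (u : (Fin n → ℝ) → E) (x : Fin n → ℝ) : E :=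
  fderiv ℝ u x (Pi.single i 1)

/-- `ℤⁿ`-periodicity of a function on `ℝⁿ`. -/
def ZPeriodic {n : ℕ} {α : Type*} (f : (Fin n → ℝ) → α) : Prop :=
  ∀ (x : Fin n → ℝ) (γ : Fin n → ℤ), f (x + fun i => (γ i : ℝ)) = f x

/-- The dot product `ξ · x` of two real vectors. -/
def dotR {n : ℕ} (ξ x : Fin n → ℝ) : ℝ := ∑ i, ξ i * x i

/-- The pairing `k · x` of a complex vector `k` with a real vector `x`. -/
def dotCR {n : ℕ} (k : Fin n → ℂ) (x : Fin n → ℝ) : ℂ := ∑ i, k i * (x i : ℂ)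

/-- The second-order operator
`Pu(x) = -∑ a_{ij}(x) ∂_i∂_j u(x) + ∑ b_i(x) ∂_i u(x) + c(x) u(x)`
acting on real-valued functions. -/
def Pop {n : ℕ} (a : (Fin n → ℝ) → Fin n → Fin n → ℝ) (b : (Fin n → ℝ) → Fin n → ℝ)
    (c : (Fin n → ℝ) → ℝ) (u : (Fin n → ℝ) → ℝ) (x : Fin n → ℝ) : ℝ :=
  -(∑ i, ∑ j, a x i j * pd i (pd j u) x) + ∑ i, b x i * pd i u x + c x * u x

/-- The same operator `P` acting on complex-valued functions. -/
def PopC {n : ℕ} (a : (Fin n → ℝ) → Fin n → Fin n → ℝ) (b : (Fin n → ℝ) → Fin n → ℝ)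
    (c : (Fin n → ℝ) → ℝ) (u : (Fin n → ℝ) → ℂ) (x : Fin n → ℝ) : ℂ :=
  -(∑ i, ∑ j, (a x i j : ℂ) * pd i (pd j u) x) + ∑ i, (b x i : ℂ) * pd i u x + (c x : ℂ) * u x

/-- The formal adjoint `P*v = -∑ ∂_i∂_j(a_{ij} v) - ∑ ∂_i(b_i v) + c v`
acting on real-valued functions. -/
def Padj {n : ℕ} (a : (Fin n → ℝ) → Fin n → Fin n → ℝ) (b : (Fin n → ℝ) → Fin n → ℝ)
    (c : (Fin n → ℝ) → ℝ) (v : (Fin n → ℝ) → ℝ) (x : Fin n → ℝ) : ℝ :=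
  -(∑ i, ∑ j, pd i (pd j fun z => a z i j * v z) x) - (∑ i, pd i (fun y => b y i * v y) x)
    + c x * v x

/-- The formal adjoint `P*` acting on complex-valued functions. -/
def PadjC {n : ℕ} (a : (Fin n → ℝ) → Fin n → Fin n → ℝ) (b : (Fin n → ℝ) → Fin n → ℝ)
    (c : (Fin n → ℝ) → ℝ) (v : (Fin n → ℝ) → ℂ) (x : Fin n → ℝ) : ℂ :=
  -(∑ i, ∑ j, pd i (pd j fun z => (a z i j : ℂ) * v z) x)
    - (∑ i, pd i (fun y => (b y i : ℂ) * v y) x) + (c x : ℂ) * v x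

/-- The standing assumptions on the operator `P`: the coefficients are real-valued,
`ℤⁿ`-periodic, `a_{ij} ∈ C²`, `b_i ∈ C¹`, `c` continuous, and the uniform ellipticity
condition `∑ a_{ij}(x) ζ_i ζ_j ≥ a₀ |ζ|²` holds. -/
def IsPeriodicElliptic {n : ℕ} (a : (Fin n → ℝ) → Fin n → Fin n → ℝ)
    (b : (Fin n → ℝ) → Fin n → ℝ) (c : (Fin n → ℝ) → ℝ) : Prop :=
  (∀ i j, ContDiff ℝ 2 fun x => a x i j) ∧ (∀ i, ContDiff ℝ 1 fun x => b x i) ∧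
    Continuous c ∧ ZPeriodic a ∧ ZPeriodic b ∧ ZPeriodic c ∧
    ∃ a₀ : ℝ, 0 < a₀ ∧
      ∀ x ζ : Fin n → ℝ, a₀ * ∑ i, ζ i ^ 2 ≤ ∑ i, ∑ j, a x i j * ζ i * ζ j

/-- `lam` is a real number such that `Pu = lam·u` admits a positive solution of the form
`u(x) = e^{ξ·x} p(x)` with `p` positive, `C²` and `ℤⁿ`-periodic. -/
def IsPrincipalEV {n : ℕ} (a : (Fin n → ℝ) → Fin n → Fin n → ℝ)
    (b : (Fin n → ℝ) → Fin n → ℝ) (c : (Fin n → ℝ) → ℝ) (ξ : Fin n → ℝ) (lam : ℝ) : Prop :=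
  ∃ p : (Fin n → ℝ) → ℝ, ContDiff ℝ 2 p ∧ (∀ x, 0 < p x) ∧ ZPeriodic p ∧
    ∀ x, Pop a b c (fun y => Real.exp (dotR ξ y) * p y) x
      = lam * (Real.exp (dotR ξ x) * p x)

/-- The generalized principal eigenvalue
`Λ₀ = sup {λ ∈ ℝ : ∃ u > 0 with Pu = λu in ℝⁿ}`. -/
def gpev {n : ℕ} (a : (Fin n → ℝ) → Fin n → Fin n → ℝ) (b : (Fin n → ℝ) → Fin n → ℝ)
    (c : (Fin n → ℝ) → ℝ) : ℝ :=
  sSup {lam : ℝ | ∃ u : (Fin n → ℝ) → ℝ, ContDiff ℝ 2 u ∧ (∀ x, 0 < u x) ∧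
    ∀ x, Pop a b c u x = lam * u x}

/-- `k` belongs to the Fermi surface `F_P`: the equation `Pu = 0` admits a nonzero Bloch
solution `u(x) = e^{i k·x} p(x)` with `p` `ℤⁿ`-periodic. -/
def InFermi {n : ℕ} (a : (Fin n → ℝ) → Fin n → Fin n → ℝ) (b : (Fin n → ℝ) → Fin n → ℝ)
    (c : (Fin n → ℝ) → ℝ) (k : Fin n → ℂ) : Prop :=
  ∃ p : (Fin n → ℝ) → ℂ, ContDiff ℝ 2 p ∧ ZPeriodic p ∧ (∃ x, p x ≠ 0) ∧
    ∀ x, PopC a b c (fun y => Complex.exp (Complex.I * dotCR k y) * p y) x = 0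

/-- `(k, lam)` belongs to the Bloch variety `B_P`: the equation `Pu = lam·u` admits a
nonzero Bloch solution with quasimomentum `k`. -/
def InBloch {n : ℕ} (a : (Fin n → ℝ) → Fin n → Fin n → ℝ) (b : (Fin n → ℝ) → Fin n → ℝ)
    (c : (Fin n → ℝ) → ℝ) (k : Fin n → ℂ) (lam : ℂ) : Prop :=
  ∃ p : (Fin n → ℝ) → ℂ, ContDiff ℝ 2 p ∧ ZPeriodic p ∧ (∃ x, p x ≠ 0) ∧
    ∀ x, PopC a b c (fun y => Complex.exp (Complex.I * dotCR k y) * p y) x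
      = lam * (Complex.exp (Complex.I * dotCR k x) * p x)

/-- `k` belongs to the Fermi surface `F_{P*}` of the formal adjoint. -/
def InFermiAdj {n : ℕ} (a : (Fin n → ℝ) → Fin n → Fin n → ℝ) (b : (Fin n → ℝ) → Fin n → ℝ)
    (c : (Fin n → ℝ) → ℝ) (k : Fin n → ℂ) : Prop :=
  ∃ p : (Fin n → ℝ) → ℂ, ContDiff ℝ 2 p ∧ ZPeriodic p ∧ (∃ x, p x ≠ 0) ∧
    ∀ x, PadjC a b c (fun y => Complex.exp (Complex.I * dotCR k y) * p y) x = 0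

/-- `(k, lam)` belongs to the Bloch variety `B_{P*}` of the formal adjoint. -/
def InBlochAdj {n : ℕ} (a : (Fin n → ℝ) → Fin n → Fin n → ℝ) (b : (Fin n → ℝ) → Fin n → ℝ)
    (c : (Fin n → ℝ) → ℝ) (k : Fin n → ℂ) (lam : ℂ) : Prop :=
  ∃ p : (Fin n → ℝ) → ℂ, ContDiff ℝ 2 p ∧ ZPeriodic p ∧ (∃ x, p x ≠ 0) ∧
    ∀ x, PadjC a b c (fun y => Complex.exp (Complex.I * dotCR k y) * p y) x
      = lam * (Complex.exp (Complex.I * dotCR k x) * p x)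

/-- The Euclidean norm of an integer vector `γ ∈ ℤⁿ`. -/
def enormZ {n : ℕ} (γ : Fin n → ℤ) : ℝ := Real.sqrt (∑ i, ((γ i : ℝ)) ^ 2)

/-- The support (indicator) function `h_G(x) = sup_{ξ ∈ G} ξ · x` of a set `G ⊆ ℝⁿ`. -/
def suppFn {n : ℕ} (G : Set (Fin n → ℝ)) (x : Fin n → ℝ) : ℝ :=
  sSup ((fun ξ => dotR ξ x) '' G)

/-- The closed tube `𝒯_G = {k ∈ ℂⁿ : Im k ∈ G}` over a set `G ⊆ ℝⁿ`. -/
def tubeOver {n : ℕ} (G : Set (Fin n → ℝ)) : Set (Fin n → ℂ) :=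
  {k | (fun i => (k i).im) ∈ G}

/-! ### Calculus of partial derivatives -/

lemma pd_mul {n : ℕ} (i : Fin n) {f g : (Fin n → ℝ) → ℝ} (hf : Differentiable ℝ f)
    (hg : Differentiable ℝ g) :
    pd i (fun x => f x * g x) = fun x => pd i f x * g x + f x * pd i g x := by
  funext x
  simp only [pd]
  rw [fderiv_fun_mul (hf x) (hg x)]
  simp only [add_apply, smul_apply, smul_eq_mul]
  ring

lemma pd_add {n : ℕ} (i : Fin n) {f g : (Fin n → ℝ) → ℝ} (hf : Differentiable ℝ f)
    (hg : Differentiable ℝ g) :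
    pd i (fun x => f x + g x) = fun x => pd i f x + pd i g x := by
  funext x
  simp only [pd]
  rw [fderiv_fun_add (hf x) (hg x)]
  simp

lemma contDiff_pd {n : ℕ} (i : Fin n) {f : (Fin n → ℝ) → ℝ} (hf : ContDiff ℝ 2 f) :
    ContDiff ℝ 1 (pd i f) :=
  (hf.fderiv_right (m := 1) (by norm_num)).clm_apply contDiff_const

lemma pd_pd_eq {n : ℕ} (i j : Fin n) {f : (Fin n → ℝ) → ℝ} (hf : ContDiff ℝ 2 f)
    (x : Fin n → ℝ) :
    pd i (pd j f) x = fderiv ℝ (fderiv ℝ f) x (Pi.single i 1) (Pi.single j 1) := by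
  have h : Differentiable ℝ (fderiv ℝ f) :=
    (hf.fderiv_right (m := 1) (by norm_num)).differentiable (by norm_num)
  have := (h x).hasFDerivAt.clm_apply (hasFDerivAt_const (Pi.single j (1 : ℝ) : Fin n → ℝ) x)
  change fderiv ℝ (fun y => fderiv ℝ f y (Pi.single j 1)) x (Pi.single i 1) = _
  rw [this.fderiv]
  simp

lemma pd_pd_symm {n : ℕ} (i j : Fin n) {f : (Fin n → ℝ) → ℝ} (hf : ContDiff ℝ 2 f)
    (x : Fin n → ℝ) : pd i (pd j f) x = pd j (pd i f) x := by
  rw [pd_pd_eq i j hf, pd_pd_eq j i hf]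
  exact (hf.contDiffAt.isSymmSndFDerivAt (by simp)).eq _ _

/-! ### Second-derivative conditions at a local maximum -/

/-- The Hessian quadratic form of a `C²` function is nonpositive at a local maximum. If it were
positive in some direction, the function would also have a local minimum along that line, hence be
locally constant there, and its second derivative would vanish. -/
lemma hessian_nonpos {n : ℕ} {f : (Fin n → ℝ) → ℝ} (hf : ContDiff ℝ 2 f)
    {x : Fin n → ℝ} (hx : IsLocalMax f x) (ζ : Fin n → ℝ) :
    fderiv ℝ (fderiv ℝ f) x ζ ζ ≤ 0 := by
  have hl : ∀ t : ℝ, HasDerivAt (fun t : ℝ => x + t • ζ) ζ t := fun t => by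
    simpa using ((hasDerivAt_id t).smul_const ζ).const_add x
  have hfd : Differentiable ℝ f := hf.differentiable (by norm_num)
  have hfd2 : Differentiable ℝ (fderiv ℝ f) :=
    (hf.fderiv_right (m := 1) (by norm_num)).differentiable (by norm_num)
  set g : ℝ → ℝ := fun t => f (x + t • ζ) with hg
  have h1 : deriv g = fun t => fderiv ℝ f (x + t • ζ) ζ := by
    funext t
    exact (HasFDerivAt.comp_hasDerivAt (f := fun t : ℝ => x + t • ζ) t (hfd _).hasFDerivAt
      (hl t)).deriv
  have h2 : deriv (deriv g) 0 = fderiv ℝ (fderiv ℝ f) x ζ ζ := by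
    rw [h1]
    have h3 : HasDerivAt (fun t : ℝ => fderiv ℝ f (x + t • ζ))
        (fderiv ℝ (fderiv ℝ f) (x + (0 : ℝ) • ζ) ζ) 0 :=
      HasFDerivAt.comp_hasDerivAt (f := fun t : ℝ => x + t • ζ) 0 (hfd2 _).hasFDerivAt (hl 0)
    have h4 := h3.clm_apply (hasDerivAt_const (0 : ℝ) ζ)
    rw [h4.deriv]
    simp
  have hc : Continuous g := hf.continuous.comp (by fun_prop)
  have hmax : IsLocalMax g 0 := by
    have ht : Tendsto (fun t : ℝ => x + t • ζ) (nhds 0) (nhds x) := by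
      simpa using (hl 0).continuousAt.tendsto
    filter_upwards [ht.eventually hx] with t h
    simpa [hg] using h
  by_contra! hpos
  rw [← h2] at hpos
  have hmin := isLocalMin_of_deriv_deriv_pos hpos hmax.deriv_eq_zero hc.continuousAt
  have hconst : g =ᶠ[nhds 0] fun _ => g 0 := by
    filter_upwards [hmin, hmax] with t ht1 ht2 using le_antisymm ht2 ht1
  have h0 : deriv (deriv g) 0 = 0 := by
    rw [hconst.deriv.deriv_eq]
    simp
  linarith

open scoped MatrixOrder Matrix.Norms.L2Operator in
/-- At a local maximum `∑ a_{ij} ∂_i∂_j f ≤ 0`: minus the Hessian factors as `CᵀC`, so the sum is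
minus a sum of values of the quadratic form of `a`, which need not be symmetric. -/
lemma sum_pd_pd_nonpos {n : ℕ} {f : (Fin n → ℝ) → ℝ} (hf : ContDiff ℝ 2 f)
    {x : Fin n → ℝ} (hx : IsLocalMax f x) (A : Fin n → Fin n → ℝ)
    (hA : ∀ ζ : Fin n → ℝ, 0 ≤ ∑ i, ∑ j, A i j * ζ i * ζ j) :
    ∑ i, ∑ j, A i j * pd i (pd j f) x ≤ 0 := by
  set H : Matrix (Fin n) (Fin n) ℝ := Matrix.of fun i j => -pd i (pd j f) x with hH
  have hpsd : H.PosSemidef := by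
    refine Matrix.PosSemidef.of_dotProduct_mulVec_nonneg ?_ ?_
    · ext i j
      simp [hH, pd_pd_symm i j hf x]
    · intro ζ
      have h := hessian_nonpos hf hx ζ
      have hζ : ζ = ∑ i, ζ i • (Pi.single i (1 : ℝ) : Fin n → ℝ) := by
        simpa using pi_eq_sum_univ' ζ
      have he : fderiv ℝ (fderiv ℝ f) x ζ ζ = ∑ i, ∑ j, ζ i * (ζ j * pd i (pd j f) x) := by
        conv_lhs => rw [hζ]
        simp only [map_sum, map_smul, sum_apply,
          smul_apply, smul_eq_mul, pd_pd_eq _ _ hf, Finset.mul_sum]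
        rw [Finset.sum_comm]
        simp only [mul_left_comm]
      rw [he] at h
      have : star ζ ⬝ᵥ H.mulVec ζ = -∑ i, ∑ j, ζ i * (ζ j * pd i (pd j f) x) := by
        simp only [dotProduct, Matrix.mulVec, hH, Matrix.of_apply, Finset.mul_sum, Pi.star_apply,
          star_trivial, ← Finset.sum_neg_distrib]
        exact Finset.sum_congr rfl fun i _ => Finset.sum_congr rfl fun j _ => by ring
      rw [this]; linarith
  obtain ⟨C, hC⟩ := CStarAlgebra.nonneg_iff_eq_star_mul_self.mp hpsd.nonneg
  have hent : ∀ i j, pd i (pd j f) x = -∑ k, C k i * C k j := fun i j => by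
    have : H i j = ∑ k, C k i * C k j := by rw [hC]; simp [Matrix.mul_apply, Matrix.star_apply]
    rw [← this]; simp [hH]
  have : ∑ i, ∑ j, A i j * pd i (pd j f) x = -∑ k, ∑ i, ∑ j, A i j * C k i * C k j := by
    have hs : ∑ k, ∑ i, ∑ j, A i j * C k i * C k j = ∑ i, ∑ j, ∑ k, A i j * C k i * C k j := by
      rw [Finset.sum_comm]
      exact Finset.sum_congr rfl fun i _ => Finset.sum_comm
    rw [hs]
    simp only [hent, mul_neg, Finset.mul_sum, Finset.sum_neg_distrib, mul_assoc]
  rw [this]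
  exact neg_nonpos.2 (Finset.sum_nonneg fun k _ => hA _)

/-! ### Maxima of periodic functions -/

lemma ZPeriodic.exists_isMax {n : ℕ} {f : (Fin n → ℝ) → ℝ} (hf : Continuous f)
    (hper : ZPeriodic f) : ∃ z, ∀ x, f x ≤ f z := by
  obtain ⟨z, -, hz⟩ := (isCompact_Icc (a := (0 : Fin n → ℝ)) (b := 1)).exists_isMaxOn
    ⟨0, by simp⟩ hf.continuousOn
  refine ⟨z, fun x => ?_⟩
  have : f (fun i => Int.fract (x i)) = f x := by
    rw [← hper (fun i => Int.fract (x i)) fun i => ⌊x i⌋]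
    congr 1
    funext i
    simp [Int.fract_add_floor]
  rw [← this]
  exact hz ⟨fun i => Int.fract_nonneg _, fun i => (Int.fract_lt_one _).le⟩

/-! ### The barrier -/

/-- The barrier `s + k s² - |x - z|²` with `s = ν · (x - z)`, a quadratic polynomial vanishing
at `z`. -/
def barrier {n : ℕ} (ν z : Fin n → ℝ) (k : ℝ) (x : Fin n → ℝ) : ℝ :=
  (∑ i, ν i * (x i - z i)) + k * (∑ i, ν i * (x i - z i)) ^ 2 - ∑ i, (x i - z i) ^ 2

lemma contDiff_barrier {n : ℕ} (ν z : Fin n → ℝ) (k : ℝ) : ContDiff ℝ 2 (barrier ν z k) := by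
  unfold barrier
  fun_prop

lemma hasFDerivAt_lin {n : ℕ} (ν z x : Fin n → ℝ) :
    HasFDerivAt (fun x : Fin n → ℝ => ∑ i, ν i * (x i - z i))
      (∑ i, ν i • (ContinuousLinearMap.proj i : (Fin n → ℝ) →L[ℝ] ℝ)) x :=
  HasFDerivAt.fun_sum fun i _ => ((hasFDerivAt_apply i x).sub_const (z i)).const_mul (ν i)

lemma pd_barrier {n : ℕ} (ν z : Fin n → ℝ) (k : ℝ) (i : Fin n) :
    pd i (barrier ν z k) = fun x =>
      ν i + 2 * k * (∑ l, ν l * (x l - z l)) * ν i - 2 * (x i - z i) := by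
  funext x
  have h1 := hasFDerivAt_lin ν z x
  have h2 : HasFDerivAt (fun x : Fin n → ℝ => ∑ i, (x i - z i) ^ 2)
      (∑ i, (2 * (x i - z i)) • (ContinuousLinearMap.proj i : (Fin n → ℝ) →L[ℝ] ℝ)) x :=
    HasFDerivAt.fun_sum fun i _ => by
      simpa using ((hasFDerivAt_apply i x).sub_const (z i)).pow 2
  have h := (h1.add ((h1.pow 2).const_mul k)).sub h2
  unfold pd
  refine (congrArg (fun T : (Fin n → ℝ) →L[ℝ] ℝ => T (Pi.single i 1)) h.fderiv).trans ?_
  simp [sum_apply, Pi.single_apply]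
  ring

lemma pd_pd_barrier {n : ℕ} (ν z : Fin n → ℝ) (k : ℝ) (i j : Fin n) (x : Fin n → ℝ) :
    pd i (pd j (barrier ν z k)) x = 2 * k * ν i * ν j - 2 * if i = j then 1 else 0 := by
  rw [pd_barrier]
  have h1 := hasFDerivAt_lin ν z x
  have h := (((h1.const_mul (2 * k)).mul_const (ν j)).const_add (ν j)).sub
    (((hasFDerivAt_apply j x).sub_const (z j)).const_mul 2)
  unfold pd
  refine (congrArg (fun T : (Fin n → ℝ) →L[ℝ] ℝ => T (Pi.single i 1)) h.fderiv).trans ?_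
  simp [sum_apply, Pi.single_apply, eq_comm]
  ring

/-! ### The strong maximum principle -/

/-- If `w` is maximal at `z` and `h(z) = 0`, while `h < 0` wherever `w` takes its maximum on the
sphere of radius `r` about `z`, then a small multiple of `h` added to `w` keeps the maximum over the
closed ball away from the sphere. -/
lemma exists_isLocalMax_perturbed {n : ℕ} {w h : (Fin n → ℝ) → ℝ} (hw : Continuous w)
    (hh : Continuous h) {z : Fin n → ℝ} (hmax : ∀ x, w x ≤ w z) (hz : h z = 0) {r : ℝ} (hr : 0 < r)
    (hneg : ∀ x ∈ Metric.sphere z r, w x = w z → h x < 0) :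
    ∃ ε > 0, ∃ x ∈ Metric.ball z r, IsLocalMax (fun y => w y + ε * h y) x := by
  have hC : IsCompact (Metric.sphere z r ∩ {x | 0 ≤ h x}) :=
    (isCompact_sphere z r).inter_right (isClosed_le continuous_const hh)
  -- The gap `δ` between `w` and its maximum on the part of the sphere where `h ≥ 0`.
  obtain ⟨δ, hδ, hgap⟩ : ∃ δ > 0, ∀ x ∈ Metric.sphere z r ∩ {x | 0 ≤ h x}, δ ≤ w z - w x := by
    refine hC.exists_forall_le' (f := fun x => w z - w x) (by fun_prop) (a := 0) ?_
    rintro x ⟨hx, hx0⟩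
    have : w x ≠ w z := fun e => absurd (hneg x hx e) (not_lt.2 hx0)
    have := lt_of_le_of_ne (hmax x) this
    linarith
  obtain ⟨H, hH⟩ := (isCompact_sphere z r).exists_bound_of_continuousOn hh.continuousOn
  set ε := δ / (2 * (|H| + 1)) with hε
  have hεpos : 0 < ε := by positivity
  have hlt : ∀ x ∈ Metric.sphere z r, w x + ε * h x < w z := by
    intro x hx
    rcases lt_or_ge (h x) 0 with h0 | h0
    · have := mul_neg_of_pos_of_neg hεpos h0
      have := hmax x
      linarith
    · have h1 := hgap x ⟨hx, h0⟩
      have h2 : h x ≤ |H| + 1 := by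
        have := hH x hx
        rw [Real.norm_eq_abs] at this
        linarith [le_abs_self (h x), le_abs_self H]
      have h3 : ε * h x ≤ ε * (|H| + 1) := mul_le_mul_of_nonneg_left h2 hεpos.le
      have h4 : ε * (|H| + 1) = δ / 2 := by
        rw [hε]; field_simp
      linarith
  obtain ⟨x, hxK, hx⟩ := (isCompact_closedBall z r).exists_isMaxOn
    ⟨z, Metric.mem_closedBall_self hr.le⟩
    (f := fun y => w y + ε * h y) (by fun_prop)
  have hzx : w z ≤ w x + ε * h x := by
    simpa [hz] using hx (Metric.mem_closedBall_self hr.le)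
  have hxb : x ∈ Metric.ball z r := by
    refine lt_of_le_of_ne (Metric.mem_closedBall.1 hxK) fun e => ?_
    exact absurd (hlt x e) (not_lt.2 hzx)
  exact ⟨ε, hεpos, x, hxb, hx.isLocalMax (Filter.mem_of_superset
    (Metric.isOpen_ball.mem_nhds hxb) Metric.ball_subset_closedBall)⟩

/-- A nonempty closed set has a point nearest, in the Euclidean distance, to any given
point. -/
lemma exists_nearest {n : ℕ} {S : Set (Fin n → ℝ)} (hS : IsClosed S) (hne : S.Nonempty)
    (x₀ : Fin n → ℝ) :
    ∃ z ∈ S, ∀ x ∈ S, ∑ i, (z i - x₀ i) ^ 2 ≤ ∑ i, (x i - x₀ i) ^ 2 := by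
  have hN : Continuous fun x : Fin n → ℝ => ∑ i, (x i - x₀ i) ^ 2 := by fun_prop
  refine hN.continuousOn.exists_isMinOn' hS hne.some_mem ?_
  have ht : Tendsto (fun x : Fin n → ℝ => ∑ i, (x i - x₀ i) ^ 2) (cocompact _) atTop := by
    refine tendsto_atTop_mono (f := fun x => dist x x₀ - 1) (fun x => ?_)
      (tendsto_atTop_add_const_right _ _ (tendsto_dist_right_cocompact_atTop x₀))
    have hs : 0 ≤ ∑ i, (x i - x₀ i) ^ 2 := Finset.sum_nonneg fun i _ => sq_nonneg _
    have : dist x x₀ ≤ ∑ i, (x i - x₀ i) ^ 2 + 1 := by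
      refine (dist_pi_le_iff (by positivity)).2 fun i => ?_
      have h1 := Finset.single_le_sum (f := fun i => (x i - x₀ i) ^ 2)
        (fun i _ => sq_nonneg _) (Finset.mem_univ i)
      rw [Real.dist_eq]
      have h2 := sq_abs (x i - x₀ i)
      nlinarith [sq_nonneg (|x i - x₀ i| - 1)]
    linarith
  exact (ht.eventually_ge_atTop _).filter_mono inf_le_left

/-- The strong maximum principle on `ℝⁿ` for `-∑ a_{ij} ∂_i∂_j + ∑ B_i ∂_i`: a solution that attains
its maximum is constant. -/
lemma strong_max {n : ℕ} (a : (Fin n → ℝ) → Fin n → Fin n → ℝ) (B : (Fin n → ℝ) → Fin n → ℝ)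
    (ha : ∀ i j, Continuous fun x => a x i j) (hB : ∀ i, Continuous fun x => B x i)
    {a₀ : ℝ} (ha₀ : 0 < a₀)
    (hell : ∀ x ζ : Fin n → ℝ, a₀ * ∑ i, ζ i ^ 2 ≤ ∑ i, ∑ j, a x i j * ζ i * ζ j)
    {w : (Fin n → ℝ) → ℝ} (hw : ContDiff ℝ 2 w)
    (heq : ∀ x, -(∑ i, ∑ j, a x i j * pd i (pd j w) x) + ∑ i, B x i * pd i w x = 0)
    {z₀ : Fin n → ℝ} (hmax : ∀ x, w x ≤ w z₀) (x₀ : Fin n → ℝ) : w x₀ = w z₀ := by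
  by_contra hx₀
  obtain ⟨z, hzS, hzmin⟩ := exists_nearest (S := {x | w x = w z₀})
    (isClosed_eq hw.continuous continuous_const) ⟨z₀, rfl⟩ x₀
  rw [Set.mem_ofPred_eq] at hzS
  set ν : Fin n → ℝ := fun i => x₀ i - z i with hν
  have hνpos : 0 < ∑ i, ν i ^ 2 := by
    refine lt_of_le_of_ne (Finset.sum_nonneg fun i _ => sq_nonneg _) fun e => hx₀ ?_
    rw [eq_comm, Finset.sum_eq_zero_iff_of_nonneg fun i _ => sq_nonneg _] at e
    have : x₀ = z := funext fun i => by
      have := e i (Finset.mem_univ i)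
      simp only [hν] at this
      exact sub_eq_zero.1 (pow_eq_zero_iff (two_ne_zero)|>.1 this)
    rw [this, hzS]
  -- The maximum set lies outside the open ball about `x₀` with `z` on its boundary.
  have hout : ∀ x, w x = w z₀ → 2 * ∑ i, ν i * (x i - z i) ≤ ∑ i, (x i - z i) ^ 2 := by
    intro x hx
    have h := hzmin x hx
    have e : ∑ i, (x i - x₀ i) ^ 2 = ∑ i, (x i - z i) ^ 2 - 2 * ∑ i, ν i * (x i - z i)
        + ∑ i, (z i - x₀ i) ^ 2 := by
      rw [Finset.mul_sum, ← Finset.sum_sub_distrib, ← Finset.sum_add_distrib]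
      exact Finset.sum_congr rfl fun i _ => by simp only [hν]; ring
    linarith
  set m := a₀ * ∑ i, ν i ^ 2 with hm
  have hmpos : 0 < m := mul_pos ha₀ hνpos
  set T := 2 * (∑ i, ∑ j, a z i j * if i = j then 1 else 0) + ∑ i, B z i * ν i with hT
  -- `k` is large enough for the operator applied to the barrier to be negative at `z`.
  set k := (|T| + 1) / m with hk
  have hkpos : 0 < k := by positivity
  set h := barrier ν z k with hh
  have hhc : ContDiff ℝ 2 h := contDiff_barrier ν z k
  have hcont : Continuous fun x => -(∑ i, ∑ j, a x i j * pd i (pd j h) x)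
      + ∑ i, B x i * pd i h x := by
    simp only [hh, pd_pd_barrier]
    simp only [pd_barrier]
    fun_prop
  have hLz : -(∑ i, ∑ j, a z i j * pd i (pd j h) z) + ∑ i, B z i * pd i h z < 0 := by
    have e1 : ∑ i, ∑ j, a z i j * pd i (pd j h) z = 2 * k * (∑ i, ∑ j, a z i j * ν i * ν j)
        - 2 * (∑ i, ∑ j, a z i j * if i = j then 1 else 0) := by
      simp only [hh, pd_pd_barrier, Finset.mul_sum, ← Finset.sum_sub_distrib]
      exact Finset.sum_congr rfl fun i _ => Finset.sum_congr rfl fun j _ => by ring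
    have e2 : ∑ i, B z i * pd i h z = ∑ i, B z i * ν i := by
      simp [hh, pd_barrier]
    have e3 : k * m = |T| + 1 := by rw [hk]; field_simp
    have e4 := mul_le_mul_of_nonneg_left (hell z ν) hkpos.le
    rw [e1, e2]
    linarith [le_abs_self T, abs_nonneg T]
  have hn1 : ∀ᶠ x in nhds z, -(∑ i, ∑ j, a x i j * pd i (pd j h) x)
      + ∑ i, B x i * pd i h x < 0 := hcont.continuousAt.eventually_lt continuousAt_const hLz
  have hn2 : ∀ᶠ x in nhds z, |k * ∑ i, ν i * (x i - z i)| < 1 / 2 := by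
    have : Continuous fun x : Fin n → ℝ => |k * ∑ i, ν i * (x i - z i)| := by fun_prop
    exact this.continuousAt.eventually_lt continuousAt_const (by simp)
  obtain ⟨r, hr, hrK⟩ := Metric.nhds_basis_closedBall.mem_iff.1 (hn1.and hn2)
  have hneg : ∀ x ∈ Metric.sphere z r, w x = w z → h x < 0 := by
    intro x hx hwx
    have hxz : x ≠ z := Metric.ne_of_mem_sphere hx hr.ne'
    have h2 := abs_lt.1 (hrK (Metric.sphere_subset_closedBall hx)).2
    have h3 := hout x (hwx.trans hzS)
    have h4 : 0 < ∑ i, (x i - z i) ^ 2 := by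
      obtain ⟨i, hi⟩ := Function.ne_iff.1 hxz
      exact Finset.sum_pos' (fun i _ => sq_nonneg _)
        ⟨i, Finset.mem_univ i, by have := sub_ne_zero.2 hi; positivity⟩
    simp only [hh, barrier]
    set s := ∑ i, ν i * (x i - z i)
    set N := ∑ i, (x i - z i) ^ 2
    rcases le_or_gt s 0 with hs | hs
    · nlinarith [mul_nonneg (neg_nonneg.2 hs) (by linarith : 0 ≤ 1 + k * s)]
    · nlinarith [mul_pos hs (by linarith : 0 < 1 / 2 - k * s)]
  obtain ⟨ε, hε, x, hxb, hxmax⟩ := exists_isLocalMax_perturbed hw.continuous hhc.continuous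
    (z := z) (fun x => hzS ▸ hmax x) (by simp [hh, barrier]) hr hneg
  have hL := (hrK (Metric.ball_subset_closedBall hxb)).1
  have hεh : ContDiff ℝ 2 fun y => ε * h y := contDiff_const.mul hhc
  have hpdε : ∀ i, pd i (fun y => ε * h y) = fun y => ε * pd i h y := fun i => by
    rw [pd_mul i (by fun_prop) (hhc.differentiable (by norm_num))]
    funext y
    simp [pd]
  have hpd : ∀ i, pd i (fun y => w y + ε * h y) = fun y => pd i w y + ε * pd i h y := fun i => by
    rw [pd_add i (hw.differentiable (by norm_num)) (hεh.differentiable (by norm_num)), hpdε]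
  have hpd2 : ∀ i j, pd i (pd j fun y => w y + ε * h y) x
      = pd i (pd j w) x + ε * pd i (pd j h) x := fun i j => by
    have hd := (contDiff_pd j hhc).differentiable (by norm_num)
    rw [hpd, pd_add i ((contDiff_pd j hw).differentiable (by norm_num)) (hd.const_mul ε),
      pd_mul i (by fun_prop) hd]
    simp [pd]
  have hgrad : ∀ i, pd i w x + ε * pd i h x = 0 := fun i => by
    rw [← congrFun (hpd i) x, pd, hxmax.fderiv_eq_zero]
    simp
  have hsec := sum_pd_pd_nonpos (hw.add hεh) hxmax (a x) fun ζ =>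
    (mul_nonneg ha₀.le (Finset.sum_nonneg fun i _ => sq_nonneg _)).trans (hell x ζ)
  have e1 : ∑ i, ∑ j, a x i j * pd i (pd j fun y => w y + ε * h y) x
      = ∑ i, ∑ j, a x i j * pd i (pd j w) x + ε * ∑ i, ∑ j, a x i j * pd i (pd j h) x := by
    simp only [hpd2, Finset.mul_sum, ← Finset.sum_add_distrib]
    exact Finset.sum_congr rfl fun i _ => Finset.sum_congr rfl fun j _ => by ring
  have e2 : ∑ i, B x i * pd i w x = -(ε * ∑ i, B x i * pd i h x) := by
    rw [Finset.mul_sum, ← Finset.sum_neg_distrib]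
    refine Finset.sum_congr rfl fun i _ => ?_
    linear_combination B x i * hgrad i
  have e3 := heq x
  rw [e1] at hsec
  rw [e2] at e3
  nlinarith [mul_neg_of_pos_of_neg hε hL]

/-! ### Reduction to the strong maximum principle -/

/-- Writing a solution as `u w` with `u` a solution of the same equation removes the zeroth-order
term: `w` solves an equation with the same principal part and a modified drift. -/
lemma quotient_eq {n : ℕ} (a : (Fin n → ℝ) → Fin n → Fin n → ℝ) (b : (Fin n → ℝ) → Fin n → ℝ)
    (c : (Fin n → ℝ) → ℝ) {lam : ℝ} {u w : (Fin n → ℝ) → ℝ} (hu : ContDiff ℝ 2 u)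
    (hw : ContDiff ℝ 2 w) (hupos : ∀ x, 0 < u x) (x : Fin n → ℝ)
    (hequ : Pop a b c u x = lam * u x)
    (heq : Pop a b c (fun y => u y * w y) x = lam * (u x * w x)) :
    -(∑ i, ∑ j, a x i j * pd i (pd j w) x)
      + ∑ i, (b x i - ∑ j, (a x i j + a x j i) * pd j u x / u x) * pd i w x = 0 := by
  have hud := hu.differentiable (by norm_num)
  have hwd := hw.differentiable (by norm_num)
  have hpu := fun j => (contDiff_pd j hu).differentiable (by norm_num)
  have hpw := fun j => (contDiff_pd j hw).differentiable (by norm_num)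
  have hpd2 : ∀ i j, pd i (pd j fun y => u y * w y) x
      = pd i (pd j u) x * w x + pd j u x * pd i w x + pd i u x * pd j w x
        + u x * pd i (pd j w) x := fun i j => by
    rw [pd_mul j hud hwd, pd_add i ((hpu j).fun_mul hwd) (hud.fun_mul (hpw j)), pd_mul i (hpu j) hwd,
      pd_mul i hud (hpw j)]
    ring
  have hu0 := (hupos x).ne'
  have e1 : ∑ i, ∑ j, a x i j * pd i (pd j fun y => u y * w y) x
      = w x * (∑ i, ∑ j, a x i j * pd i (pd j u) x)
        + u x * (∑ i, ∑ j, a x i j * pd i (pd j w) x)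
        + ∑ i, ∑ j, (a x i j + a x j i) * pd j u x * pd i w x := by
    have hsw : ∑ i, ∑ j, a x j i * pd j u x * pd i w x
        = ∑ i, ∑ j, a x i j * pd i u x * pd j w x := Finset.sum_comm
    simp only [add_mul, Finset.sum_add_distrib, hsw]
    simp only [hpd2, Finset.mul_sum, ← Finset.sum_add_distrib]
    exact Finset.sum_congr rfl fun i _ => Finset.sum_congr rfl fun j _ => by ring
  have e2 : ∑ i, b x i * pd i (fun y => u y * w y) x
      = w x * (∑ i, b x i * pd i u x) + u x * ∑ i, b x i * pd i w x := by
    simp only [pd_mul _ hud hwd, Finset.mul_sum, ← Finset.sum_add_distrib]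
    exact Finset.sum_congr rfl fun i _ => by ring
  have e3 : u x * ∑ i, (b x i - ∑ j, (a x i j + a x j i) * pd j u x / u x) * pd i w x
      = u x * (∑ i, b x i * pd i w x)
        - ∑ i, ∑ j, (a x i j + a x j i) * pd j u x * pd i w x := by
    simp only [sub_mul, Finset.sum_sub_distrib, mul_sub, Finset.mul_sum, Finset.sum_mul]
    congr 1
    exact Finset.sum_congr rfl fun i _ => Finset.sum_congr rfl fun j _ => by field_simp
  unfold Pop at hequ heq
  rw [e1, e2] at heq
  refine (mul_eq_zero.1 ?_).resolve_left hu0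
  rw [mul_add, e3]
  linear_combination heq - w x * hequ

lemma contDiff_dotR {n : ℕ} (ξ : Fin n → ℝ) : ContDiff ℝ 2 fun y => dotR ξ y := by
  unfold dotR
  fun_prop

/-- The theorem for real-valued `q`: the strong maximum principle applies to the periodic function
`q / p`. -/
lemma simple_real {n : ℕ} (a : (Fin n → ℝ) → Fin n → Fin n → ℝ)
    (b : (Fin n → ℝ) → Fin n → ℝ) (c : (Fin n → ℝ) → ℝ) (hP : IsPeriodicElliptic a b c)
    (ξ : Fin n → ℝ) (lam : ℝ) (p : (Fin n → ℝ) → ℝ) (hp : ContDiff ℝ 2 p) (hppos : ∀ x, 0 < p x)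
    (hpper : ZPeriodic p)
    (hpeq : ∀ x, Pop a b c (fun y => Real.exp (dotR ξ y) * p y) x
      = lam * (Real.exp (dotR ξ x) * p x))
    (q : (Fin n → ℝ) → ℝ) (hq : ContDiff ℝ 2 q) (hqper : ZPeriodic q)
    (hqeq : ∀ x, Pop a b c (fun y => Real.exp (dotR ξ y) * q y) x
      = lam * (Real.exp (dotR ξ x) * q x)) :
    ∃ c₀ : ℝ, ∀ x, q x = c₀ * p x := by
  obtain ⟨ha, hb, -, -, -, -, a₀, ha₀, hell⟩ := hP
  set w : (Fin n → ℝ) → ℝ := fun x => q x / p x with hwdef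
  have hw : ContDiff ℝ 2 w := hq.div hp fun x => (hppos x).ne'
  set u : (Fin n → ℝ) → ℝ := fun x => Real.exp (dotR ξ x) * p x with hudef
  have hu : ContDiff ℝ 2 u := by
    exact (Real.contDiff_exp.comp (contDiff_dotR ξ)).mul hp
  have hupos : ∀ x, 0 < u x := fun x => mul_pos (Real.exp_pos _) (hppos x)
  have huw : ∀ x, u x * w x = Real.exp (dotR ξ x) * q x := fun x => by
    have := (hppos x).ne'
    simp only [hudef, hwdef]
    field_simp
  obtain ⟨z, hz⟩ := ZPeriodic.exists_isMax hw.continuous fun x γ => by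
    simp only [hwdef, hqper x γ, hpper x γ]
  have hpu := fun j => (contDiff_pd j hu).continuous
  refine ⟨w z, fun x => ?_⟩
  have h := strong_max a (fun x i => b x i - ∑ j, (a x i j + a x j i) * pd j u x / u x)
    (fun i j => (ha i j).continuous)
    (fun i => (hb i).continuous.sub <| continuous_finsetSum _ fun j _ =>
      ((((ha i j).continuous.add (ha j i).continuous)).mul (hpu j)).div hu.continuous
        fun x => (hupos x).ne')
    ha₀ hell hw
    (fun x => quotient_eq a b c hu hw hupos x (hpeq x) (by simp only [huw]; exact hqeq x))
    hz x
  rw [← h]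
  simp only [hwdef]
  rw [div_mul_cancel₀ _ (hppos x).ne']

lemma pd_clm {n : ℕ} (L : ℂ →L[ℝ] ℝ) (i : Fin n) {f : (Fin n → ℝ) → ℂ}
    (hf : Differentiable ℝ f) : pd i (fun x => L (f x)) = fun x => L (pd i f x) := by
  funext x
  have := L.hasFDerivAt.comp x (hf x).hasFDerivAt
  change fderiv ℝ (L ∘ f) x _ = _
  rw [this.fderiv]
  rfl

/-- The coefficients being real, `P` commutes with real-linear functionals of the values, such as
the real and imaginary parts. -/
lemma pop_clm {n : ℕ} (L : ℂ →L[ℝ] ℝ) (a : (Fin n → ℝ) → Fin n → Fin n → ℝ)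
    (b : (Fin n → ℝ) → Fin n → ℝ) (c : (Fin n → ℝ) → ℝ) {f : (Fin n → ℝ) → ℂ}
    (hf : ContDiff ℝ 2 f) (x : Fin n → ℝ) :
    Pop a b c (fun y => L (f y)) x = L (PopC a b c f x) := by
  have hL : ∀ (r : ℝ) (z : ℂ), L (r * z) = r * L z := fun r z => by
    rw [← Complex.real_smul, map_smul, smul_eq_mul]
  have hd : ∀ j, Differentiable ℝ (pd j f) := fun j =>
    ((hf.fderiv_right (m := 1) (by norm_num)).clm_apply contDiff_const).differentiable
      (by norm_num)
  simp only [Pop, PopC, pd_clm L _ (hf.differentiable (by norm_num)), pd_clm L _ (hd _),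
    map_add, map_neg, map_sum, hL]

/-- The eigenvalue `Λ(ξ)` of `P(ξ) = e^{-ξ·x} P e^{ξ·x}` on the torus is
geometrically simple: any `ℤⁿ`-periodic `C²` (complex-valued) function `q` with
`P(e^{ξ·x} q) = Λ(ξ) e^{ξ·x} q` is a constant multiple of the positive periodic
eigenfunction `p`. -/
theorem principal_eigenvalue_geometrically_simple {n : ℕ}
    (a : (Fin n → ℝ) → Fin n → Fin n → ℝ) (b : (Fin n → ℝ) → Fin n → ℝ)
    (c : (Fin n → ℝ) → ℝ) (hP : IsPeriodicElliptic a b c)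
    (ξ : Fin n → ℝ) (Λξ : ℝ)
    (p : (Fin n → ℝ) → ℝ) (hp : ContDiff ℝ 2 p) (hppos : ∀ x, 0 < p x)
    (hpper : ZPeriodic p)
    (hpeq : ∀ x, Pop a b c (fun y => Real.exp (dotR ξ y) * p y) x
      = Λξ * (Real.exp (dotR ξ x) * p x))
    (q : (Fin n → ℝ) → ℂ) (hq : ContDiff ℝ 2 q) (hqper : ZPeriodic q)
    (hqeq : ∀ x, PopC a b c (fun y => Complex.exp (dotR ξ y : ℂ) * q y) x
      = (Λξ : ℂ) * (Complex.exp (dotR ξ x : ℂ) * q x)) :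
    ∃ c₀ : ℂ, ∀ x, q x = c₀ * (p x : ℂ) := by
  have hL : ∀ (L : ℂ →L[ℝ] ℝ) (r : ℝ) (z : ℂ), L (r * z) = r * L z := fun L r z => by
    rw [← Complex.real_smul, map_smul, smul_eq_mul]
  have hv : ContDiff ℝ 2 fun y => Complex.exp (dotR ξ y : ℂ) * q y := by
    exact (ContDiff.cexp (Complex.ofRealCLM.contDiff.comp (contDiff_dotR ξ))).mul hq
  have key : ∀ L : ℂ →L[ℝ] ℝ, ∃ c₀ : ℝ, ∀ x, L (q x) = c₀ * p x := fun L => by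
    refine simple_real a b c hP ξ Λξ p hp hppos hpper hpeq (fun x => L (q x))
      (L.contDiff.comp hq) (fun x γ => by simp only [hqper x γ]) fun x => ?_
    have h := pop_clm L a b c hv x
    rw [hqeq x] at h
    simpa only [← Complex.ofReal_exp, hL] using h
  obtain ⟨c₁, h₁⟩ := key Complex.reCLM
  obtain ⟨c₂, h₂⟩ := key Complex.imCLM
  refine ⟨⟨c₁, c₂⟩, fun x => Complex.ext ?_ ?_⟩
  · simpa using h₁ x
  · simpa using h₂ x
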